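/- Rademacher complexity of a ball of linear functionals (kernel-class step of Theorem 4.10): let V be a real inner product space, v₁,…,vₙ ∈ V, B ≥ 0, and let ε₁,…,εₙ be independent random variables each uniform on {−1, 1}. Then (1/n)·E[ sup_{w ∈ V, ‖w‖ ≤ B} Σ_{i=1}^n ε_i·⟨w, v_i⟩ ] ≤ (B/n)·√( Σ_{i=1}^n ‖v_i‖² ). -/

import Mathlib

open MeasureTheory ProbabilityTheory

/-- Supremum of `⟨w, x⟩` over the ball of radius `B` is at most `B * ‖x‖`. -/
lemma sSup_inner_ball_le {V : Type*} [NormedAddCommGroup V] [InnerProductSpace ℝ V]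
    {B : ℝ} (hB : 0 ≤ B) (x : V) :
    sSup {r : ℝ | ∃ w : V, ‖w‖ ≤ B ∧ r = inner ℝ w x} ≤ B * ‖x‖ := by
  refine Real.sSup_le ?_ (by positivity)
  rintro r ⟨w, hw, rfl⟩
  exact (real_inner_le_norm w x).trans (by gcongr)

lemma sSup_inner_ball_nonneg {V : Type*} [NormedAddCommGroup V] [InnerProductSpace ℝ V]
    {B : ℝ} (hB : 0 ≤ B) (x : V) :
    0 ≤ sSup {r : ℝ | ∃ w : V, ‖w‖ ≤ B ∧ r = inner ℝ w x} :=
  Real.sSup_nonneg' ⟨0, ⟨0, by simpa using hB, by simp⟩, le_rfl⟩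

section Rademacher

variable {Ω : Type*} [MeasurableSpace Ω] {P : Measure Ω}

lemma ae_eq_one_or_neg_one_of_map_eq {X : Ω → ℝ} (hX : Measurable X)
    (hlaw : Measure.map X P = (1 / 2 : ENNReal) • Measure.dirac (1 : ℝ)
      + (1 / 2 : ENNReal) • Measure.dirac (-1 : ℝ)) :
    ∀ᵐ ω ∂P, X ω = 1 ∨ X ω = -1 := by
  have hs : MeasurableSet {x : ℝ | x = 1 ∨ x = -1} :=
    (measurableSet_singleton (1 : ℝ)).union (measurableSet_singleton (-1 : ℝ))
  rw [← ae_map_iff hX.aemeasurable hs, hlaw, ae_add_measure_iff]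
  constructor <;> refine Measure.ae_smul_measure ?_ _ <;> simp

lemma integral_eq_zero_of_map_eq {X : Ω → ℝ} (hX : Measurable X)
    (hlaw : Measure.map X P = (1 / 2 : ENNReal) • Measure.dirac (1 : ℝ)
      + (1 / 2 : ENNReal) • Measure.dirac (-1 : ℝ)) :
    ∫ ω, X ω ∂P = 0 := by
  have hint (a : ℝ) : Integrable (fun x : ℝ => x) ((1 / 2 : ENNReal) • Measure.dirac a) :=
    (integrable_dirac (by simp)).smul_measure (by simp)
  have h := integral_map (μ := P) hX.aemeasurable (f := fun x : ℝ => x)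
    measurable_id.aestronglyMeasurable
  rw [← h, hlaw, integral_add_measure (hint _) (hint _)]
  simp [integral_smul_measure]

/-- For independent centered signs, `E‖Σ ε_i v_i‖² = Σ ‖v_i‖²`. -/
lemma integral_norm_sum_smul_sq [IsProbabilityMeasure P]
    {V : Type*} [NormedAddCommGroup V] [InnerProductSpace ℝ V]
    {ι : Type*} [Fintype ι] (v : ι → V) {ε : ι → Ω → ℝ}
    (hmeas : ∀ i, Measurable (ε i)) (hindep : iIndepFun ε P)
    (hsign : ∀ i, ∀ᵐ ω ∂P, ε i ω = 1 ∨ ε i ω = -1)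
    (hmean : ∀ i, ∫ ω, ε i ω ∂P = 0) :
    ∫ ω, ‖∑ i, ε i ω • v i‖ ^ 2 ∂P = ∑ i, ‖v i‖ ^ 2 := by
  classical
  have hint (i j : ι) : Integrable (fun ω => ε i ω * ε j ω) P := by
    refine Integrable.of_bound ((hmeas i).mul (hmeas j)).aestronglyMeasurable 1 ?_
    filter_upwards [hsign i, hsign j] with ω hi hj
    rcases hi with hi | hi <;> rcases hj with hj | hj <;> simp [hi, hj]
  have hcov (i j : ι) : ∫ ω, ε i ω * ε j ω ∂P = if i = j then 1 else 0 := by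
    split_ifs with hij
    · subst hij
      have : (fun ω => ε i ω * ε i ω) =ᵐ[P] fun _ => (1 : ℝ) := by
        filter_upwards [hsign i] with ω hi
        rcases hi with hi | hi <;> simp [hi]
      simp [integral_congr_ae this]
    · rw [(hindep.indepFun hij).integral_fun_mul_eq_mul_integral
        (hmeas i).aestronglyMeasurable (hmeas j).aestronglyMeasurable, hmean i, zero_mul]
  have hexp (ω : Ω) : ‖∑ i, ε i ω • v i‖ ^ 2
      = ∑ i, ∑ j, ε i ω * ε j ω * inner ℝ (v i) (v j) := by
    simp_rw [← real_inner_self_eq_norm_sq, sum_inner, inner_sum, real_inner_smul_left,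
      real_inner_smul_right, mul_assoc]
  simp_rw [hexp]
  rw [integral_finsetSum _ fun i _ => integrable_finsetSum _ fun j _ => (hint i j).mul_const _]
  refine Finset.sum_congr rfl fun i _ => ?_
  rw [integral_finsetSum _ fun j _ => (hint i j).mul_const _]
  simp [integral_mul_const, hcov]

lemma memLp_norm_sum_smul [IsFiniteMeasure P]
    {V : Type*} [NormedAddCommGroup V] [NormedSpace ℝ V]
    {ι : Type*} [Fintype ι] (v : ι → V) {ε : ι → Ω → ℝ}
    (hmeas : ∀ i, Measurable (ε i))
    (hsign : ∀ i, ∀ᵐ ω ∂P, ε i ω = 1 ∨ ε i ω = -1) (p : ENNReal) :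
    MemLp (fun ω => ‖∑ i, ε i ω • v i‖) p P := by
  have hsm : AEStronglyMeasurable (fun ω => ∑ i, ε i ω • v i) P :=
    Finset.aestronglyMeasurable_fun_sum _ fun i _ =>
      ((hmeas i).stronglyMeasurable.smul_const (v i)).aestronglyMeasurable
  refine MemLp.of_bound hsm.norm (∑ i, ‖v i‖) ?_
  filter_upwards [ae_all_iff.2 hsign] with ω hω
  rw [norm_norm]
  refine norm_sum_le_of_le _ fun i _ => ?_
  rcases hω i with h | h <;> simp [h]

end Rademacher

lemma integral_le_sqrt_integral_sq {Ω : Type*} [MeasurableSpace Ω] {P : Measure Ω}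
    [IsProbabilityMeasure P] {X : Ω → ℝ} (hX : MemLp X 2 P) :
    ∫ ω, X ω ∂P ≤ Real.sqrt (∫ ω, X ω ^ 2 ∂P) := by
  have h := variance_nonneg X P
  rw [variance_eq_sub hX] at h
  exact Real.le_sqrt_of_sq_le (sub_nonneg.1 h)

/-- Rademacher complexity of a ball of linear functionals (kernel-class step of
Theorem 4.10): if `ε₁,…,εₙ` are independent signs uniform on `{−1,1}` and
`v₁,…,vₙ` are vectors of a real inner product space, then
`(1/n)·E[sup_{‖w‖ ≤ B} Σ i, ε_i⟨w, v_i⟩] ≤ (B/n)·√(Σ i, ‖v_i‖²)`. -/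
theorem rademacher_complexity_ball
    {Ω : Type*} [MeasurableSpace Ω] (P : Measure Ω) [IsProbabilityMeasure P]
    {V : Type*} [NormedAddCommGroup V] [InnerProductSpace ℝ V]
    {n : ℕ} (v : Fin n → V) (B : ℝ) (hB : 0 ≤ B) (ε : Fin n → Ω → ℝ)
    (hmeas : ∀ i, Measurable (ε i))
    (hindep : iIndepFun ε P)
    (hlaw : ∀ i, Measure.map (ε i) P
      = (1 / 2 : ENNReal) • Measure.dirac (1 : ℝ)
        + (1 / 2 : ENNReal) • Measure.dirac (-1 : ℝ)) :
    (1 / n : ℝ) * ∫ ω, sSup {r : ℝ | ∃ w : V, ‖w‖ ≤ B ∧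
        r = ∑ i, ε i ω * (inner ℝ w (v i) : ℝ)} ∂P
      ≤ B / n * Real.sqrt (∑ i, ‖v i‖ ^ 2) := by
  have hsign i := ae_eq_one_or_neg_one_of_map_eq (hmeas i) (hlaw i)
  have hmean i := integral_eq_zero_of_map_eq (hmeas i) (hlaw i)
  have hmem := memLp_norm_sum_smul v hmeas hsign 2
  have hset (ω : Ω) (w : V) :
      ∑ i, ε i ω * (inner ℝ w (v i) : ℝ) = inner ℝ w (∑ i, ε i ω • v i) := by
    simp_rw [inner_sum, real_inner_smul_right]
  simp_rw [hset]
  have hsup : ∫ ω, sSup {r : ℝ | ∃ w : V, ‖w‖ ≤ B ∧ r = inner ℝ w (∑ i, ε i ω • v i)} ∂P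
      ≤ B * Real.sqrt (∑ i, ‖v i‖ ^ 2) :=
    calc _ ≤ ∫ ω, B * ‖∑ i, ε i ω • v i‖ ∂P :=
          integral_mono_of_nonneg (.of_forall fun ω => sSup_inner_ball_nonneg hB _)
            ((hmem.integrable one_le_two).const_mul B)
            (.of_forall fun ω => sSup_inner_ball_le hB _)
      _ = B * ∫ ω, ‖∑ i, ε i ω • v i‖ ∂P := integral_const_mul _ _
      _ ≤ B * Real.sqrt (∑ i, ‖v i‖ ^ 2) := by
          rw [← integral_norm_sum_smul_sq v hmeas hindep hsign hmean]
          gcongr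
          exact integral_le_sqrt_integral_sq hmem
  calc _ ≤ (1 / n : ℝ) * (B * Real.sqrt (∑ i, ‖v i‖ ^ 2)) := by gcongr
    _ = B / n * Real.sqrt (∑ i, ‖v i‖ ^ 2) := by ring
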